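/- arXiv:1610.04800 — 4 statements merged into one kernel-verified Lean document; each statement's English description precedes it below -/
import Mathlib

section
/- For a second-countable topological space X, Player II has a winning strategy in the Menger game G_fin(𝒪_X, 𝒪_X) if and only if Player II has a winning Markov strategy in G_fin(𝒪_X, 𝒪_X). -/
open TopologicalSpace Cardinal

/-- Player II has a winning (perfect-information) strategy in the selection game
`G_fin(𝒜, ℬ)`: during round `n`, Player I plays `A n ∈ 𝒜` and II responds with a
finite subset of `A n` depending on `⟨A 0, …, A n⟩`; II wins iff the union of
its selections lies in `ℬ`. -/
def WinStratFin {X : Type*} (𝒜 ℬ : Set (Set X)) : Prop :=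
  ∃ σ : (n : ℕ) → (Fin (n + 1) → Set X) → Set X,
    (∀ (n : ℕ) (s : Fin (n + 1) → Set X), (∀ i, s i ∈ 𝒜) →
      (σ n s).Finite ∧ σ n s ⊆ s (Fin.last n)) ∧
    ∀ A : ℕ → Set X, (∀ n, A n ∈ 𝒜) →
      (⋃ n : ℕ, σ n (fun i => A i)) ∈ ℬ

/-- Player II has a winning Markov strategy in `G_fin(𝒜, ℬ)`: its finite selection
from `A n` depends only on `A n` and the round number `n`. -/
def WinMarkovFin {X : Type*} (𝒜 ℬ : Set (Set X)) : Prop :=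
  ∃ σ : Set X → ℕ → Set X,
    (∀ A ∈ 𝒜, ∀ n : ℕ, (σ A n).Finite ∧ σ A n ⊆ A) ∧
    ∀ A : ℕ → Set X, (∀ n, A n ∈ 𝒜) → (⋃ n : ℕ, σ (A n) n) ∈ ℬ

/-- Player II has a winning (perfect-information) strategy in the strong selection
game `G_1(𝒜, ℬ)`: during round `n`, Player I plays `A n ∈ 𝒜` and II responds with a
single element of `A n` depending on `⟨A 0, …, A n⟩`; II wins iff the set of
its selections lies in `ℬ`. -/
def WinStratOne {X : Type*} (𝒜 ℬ : Set (Set X)) : Prop :=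
  ∃ σ : (n : ℕ) → (Fin (n + 1) → Set X) → X,
    (∀ (n : ℕ) (s : Fin (n + 1) → Set X), (∀ i, s i ∈ 𝒜) →
      σ n s ∈ s (Fin.last n)) ∧
    ∀ A : ℕ → Set X, (∀ n, A n ∈ 𝒜) →
      {x | ∃ n : ℕ, x = σ n (fun i => A i)} ∈ ℬ

/-- Player II has a winning Markov strategy in `G_1(𝒜, ℬ)`. -/
def WinMarkovOne {X : Type*} (𝒜 ℬ : Set (Set X)) : Prop :=
  ∃ σ : Set X → ℕ → X,
    (∀ A ∈ 𝒜, ∀ n : ℕ, σ A n ∈ A) ∧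
    ∀ A : ℕ → Set X, (∀ n, A n ∈ 𝒜) → {x | ∃ n : ℕ, x = σ (A n) n} ∈ ℬ

/-- `𝒟_X`: the collection of dense subsets of `X`. -/
def denseFamily (X : Type*) [TopologicalSpace X] : Set (Set X) := {D | Dense D}

/-- `ℬ_{X,x}`: the collection of subsets of `X` having `x` in their closure. -/
def blades (X : Type*) [TopologicalSpace X] (x : X) : Set (Set X) :=
  {A | x ∈ closure A}

/-- An ω-cover of `X`: an open cover such that every finite subset of `X` is
contained in some member. -/
def IsOmegaCover {X : Type*} [TopologicalSpace X] (𝒰 : Set (Set X)) : Prop :=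
  (∀ U ∈ 𝒰, IsOpen U) ∧ (⋃₀ 𝒰 = Set.univ) ∧
    ∀ F : Set X, F.Finite → ∃ U ∈ 𝒰, F ⊆ U

/-- `Ω_X`: the collection of ω-covers of `X`. -/
def omegaCovers (X : Type*) [TopologicalSpace X] : Set (Set (Set X)) :=
  {𝒰 | IsOmegaCover 𝒰}

/-- `𝒪_X`: the collection of open covers of `X`. -/
def openCovers (X : Type*) [TopologicalSpace X] : Set (Set (Set X)) :=
  {𝒰 | (∀ U ∈ 𝒰, IsOpen U) ∧ ⋃₀ 𝒰 = Set.univ}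

/-- `C_p(X)`: continuous real-valued functions on `X` with the topology of
pointwise convergence (subspace of the product `ℝ^X`). -/
abbrev Cp (X : Type*) [TopologicalSpace X] : Type _ := {f : X → ℝ // Continuous f}

/-- Countable fan tightness of `Y` at `y`. -/
def CFTat (Y : Type*) [TopologicalSpace Y] (y : Y) : Prop :=
  ∀ A : ℕ → Set Y, (∀ n, y ∈ closure (A n)) →
    ∃ B : ℕ → Set Y, (∀ n, (B n).Finite ∧ B n ⊆ A n) ∧ y ∈ closure (⋃ n, B n)

/-- Countable dense fan tightness of `Y` at `y`. -/
def CDFTat (Y : Type*) [TopologicalSpace Y] (y : Y) : Prop :=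
  ∀ A : ℕ → Set Y, (∀ n, Dense (A n)) →
    ∃ B : ℕ → Set Y, (∀ n, (B n).Finite ∧ B n ⊆ A n) ∧ y ∈ closure (⋃ n, B n)

/-- Selective separability of `X`. -/
def SelSep (X : Type*) [TopologicalSpace X] : Prop :=
  ∀ D : ℕ → Set X, (∀ n, Dense (D n)) →
    ∃ E : ℕ → Set X, (∀ n, (E n).Finite ∧ E n ⊆ D n) ∧ Dense (⋃ n, E n)

/-- The Ω-Menger selection principle `S_fin(Ω_X, Ω_X)`. -/
def OmegaMenger (X : Type*) [TopologicalSpace X] : Prop :=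
  ∀ 𝒰 : ℕ → Set (Set X), (∀ n, 𝒰 n ∈ omegaCovers X) →
    ∃ ℱ : ℕ → Set (Set X), (∀ n, (ℱ n).Finite ∧ ℱ n ⊆ 𝒰 n) ∧
      (⋃ n, ℱ n) ∈ omegaCovers X

/-- The one-point Lindelöfication topology on `Option α`: sets not containing
`none` (the point `∞`) are open, and a set containing `∞` is open iff its
complement is countable. -/
def lindTop (α : Type*) : TopologicalSpace (Option α) where
  IsOpen S := none ∈ S → Sᶜ.Countable
  isOpen_univ := by simp
  isOpen_inter := by
    intro s t hs ht hmem
    rw [Set.compl_inter]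
    exact (hs hmem.1).union (ht hmem.2)
  isOpen_sUnion := by
    intro S hS hmem
    obtain ⟨s, hsS, hns⟩ := hmem
    exact ((hS s hsS hns).mono
      (Set.compl_subset_compl.mpr (Set.subset_sUnion_of_mem hsS)))

/-!
Suppose II wins with a strategy `σ`. Refining covers, we may let I play only covers taken from a
countable basis; then at each position II has only countably many possible replies, so one move
of I per reply represents all of I's options, and the tree of representative moves has countably
many positions. For a position `s` let `K s` be the set of points covered by every reply of II
that can follow `s`. Each `K s` is relatively compact, because every open cover is refined by a
cover available to I after `s`. A point outside all of the `K s` could be dodged forever along a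
branch of representative moves, contradicting that `σ` wins; so `X` is a countable union of
relatively compact sets `K n`, and II wins by covering `K n` in round `n`, without any memory.
-/

/-- A subset `K` of `X` is relatively compact (to `X`) if every open cover of the whole space
`X` has a finite subfamily covering `K`; neither closedness nor compactness of `K` is asked. -/
def RelativelyCompact {X : Type*} [TopologicalSpace X] (K : Set X) : Prop :=
  ∀ 𝒰 ∈ openCovers X, ∃ ℱ : Set (Set X), ℱ.Finite ∧ ℱ ⊆ 𝒰 ∧ K ⊆ ⋃₀ ℱ

/-- The positions `s` of length `n` in the tree in which the moves allowed after a position `t`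
are those in `E _ t`. The moves preceding `s i` form the position `fun j => s (j.castLE _)`. -/
def treePositions {α : Type*} (E : ∀ n, (Fin n → α) → Set α) (n : ℕ) : Set (Fin n → α) :=
  {s | ∀ i : Fin n, s i ∈ E i fun j => s (j.castLE i.is_lt.le)}

section Positions

variable {α : Type*}

theorem countable_treePositions {E : ∀ n, (Fin n → α) → Set α} (hE : ∀ n s, (E n s).Countable)
    (n : ℕ) : (treePositions E n).Countable := by
  induction n with
  | zero => exact Set.subsingleton_of_subsingleton.countable
  | succ n ih =>
    refine (ih.biUnion fun s _ => (hE n s).image (Fin.snoc (α := fun _ => α) s)).mono fun s hs => ?_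
    exact Set.mem_biUnion (x := Fin.init s) (fun i => hs i.castSucc)
      ⟨s (Fin.last n), hs (Fin.last n), Fin.snoc_init_self s⟩

theorem exists_branch_of_forall_nonempty {E : ∀ n, (Fin n → α) → Set α}
    (hE : ∀ n, ∀ s ∈ treePositions E n, (E n s).Nonempty) :
    ∃ f : ℕ → α, ∀ n, f n ∈ E n fun i => f i := by
  have : Nonempty α := (hE 0 Fin.elim0 fun i => i.elim0).to_type
  choose! next hnext using hE
  let f : ℕ → α := Nat.strongRec fun n f => next n fun i => f i i.is_lt
  have hf (n : ℕ) : f n = next n fun i => f i := Nat.strongRec_eq _ n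
  refine ⟨f, fun n => ?_⟩
  induction n using Nat.strongRec with
  | ind n ih => exact hf n ▸ hnext n _ fun i => ih i i.is_lt

theorem exists_countable_image_eq_range {β : Type*} {f : α → β} (hf : (Set.range f).Countable) :
    ∃ E : Set α, E.Countable ∧ f '' E = Set.range f := by
  obtain ⟨E, -, hE⟩ := Set.exists_subset_bijOn Set.univ f
  rw [Set.image_univ] at hE
  exact ⟨E, hE.mapsTo.countable_of_injOn hE.injOn hf, hE.image_eq⟩

theorem exists_seq_position_forall_mem_reply {X : Type*} {τ : ∀ n, (Fin (n + 1) → α) → Set X}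
    (hcount : ∀ n (s : Fin n → α), (Set.range fun a => τ n (Fin.snoc s a)).Countable)
    (hwin : ∀ (f : ℕ → α) (x : X), ∃ n, x ∈ τ n fun i => f i) :
    ∃ p : ℕ → Σ n, Fin n → α, ∀ x, ∃ k, ∀ a, x ∈ τ (p k).1 (Fin.snoc (p k).2 a) := by
  choose E hEcount hE using fun n s => exists_countable_image_eq_range (hcount n s)
  have (n : ℕ) : Countable (treePositions E n) := (countable_treePositions hEcount n).to_subtype
  have : Nonempty (Σ n, treePositions E n) := ⟨0, Fin.elim0, fun i => i.elim0⟩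
  obtain ⟨p, hp⟩ := exists_surjective_nat (Σ n, treePositions E n)
  suffices ∀ x, ∃ n, ∃ s ∈ treePositions E n, ∀ a, x ∈ τ n (Fin.snoc s a) by
    refine ⟨fun k => ⟨(p k).1, (p k).2⟩, fun x => ?_⟩
    obtain ⟨n, s, hs, hx⟩ := this x
    obtain ⟨k, hk⟩ := hp ⟨n, s, hs⟩
    refine ⟨k, ?_⟩
    dsimp only
    rwa [hk]
  intro x
  by_contra! hx
  have hmiss : ∀ n, ∀ s ∈ treePositions (fun n s => {a ∈ E n s | x ∉ τ n (Fin.snoc s a)}) n,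
      {a ∈ E n s | x ∉ τ n (Fin.snoc s a)}.Nonempty := by
    intro n s hs
    obtain ⟨a, ha⟩ := hx n s fun i => (hs i).1
    obtain ⟨b, hbE, (hb : τ n (Fin.snoc s b) = τ n (Fin.snoc s a))⟩ := (hE n s).ge ⟨a, rfl⟩
    exact ⟨b, hbE, hb ▸ ha⟩
  obtain ⟨f, hf⟩ := exists_branch_of_forall_nonempty hmiss
  obtain ⟨n, hn⟩ := hwin f x
  rw [← Fin.snoc_init_self (fun i : Fin (n + 1) => f i)] at hn
  exact (hf n).2 hn

end Positions

section Menger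

variable {X : Type*}

theorem WinMarkovFin.winStratFin {𝒜 ℬ : Set (Set X)} (h : WinMarkovFin 𝒜 ℬ) :
    WinStratFin 𝒜 ℬ := by
  obtain ⟨σ, hσ, hwin⟩ := h
  exact ⟨fun n s => σ (s (Fin.last n)) n, fun n s hs => hσ _ (hs _) n, hwin⟩

variable [TopologicalSpace X]

theorem winMarkovFin_openCovers_of_iUnion_eq_univ {K : ℕ → Set X}
    (hK : ∀ n, RelativelyCompact (K n)) (hcover : ⋃ n, K n = Set.univ) :
    WinMarkovFin (openCovers X) (openCovers X) := by
  choose! σ hfin hsub hKσ using hK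
  refine ⟨fun 𝒰 n => σ n 𝒰, fun 𝒰 h𝒰 n => ⟨hfin n 𝒰 h𝒰, hsub n 𝒰 h𝒰⟩, fun 𝒰 h𝒰 => ⟨?_, ?_⟩⟩
  · intro U hU
    obtain ⟨n, hn⟩ := Set.mem_iUnion.1 hU
    exact (h𝒰 n).1 U (hsub n _ (h𝒰 n) hn)
  · rw [Set.sUnion_iUnion, ← Set.univ_subset_iff, ← hcover]
    exact Set.iUnion_mono fun n => hKσ n _ (h𝒰 n)

theorem exists_openCover_subset_basis_refining {ℬ : Set (Set X)} (hℬ : IsTopologicalBasis ℬ)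
    {𝒰 : Set (Set X)} (h𝒰 : 𝒰 ∈ openCovers X) :
    ∃ 𝒱 ∈ openCovers X, 𝒱 ⊆ ℬ ∧ ∀ V ∈ 𝒱, ∃ U ∈ 𝒰, V ⊆ U := by
  refine ⟨{V ∈ ℬ | ∃ U ∈ 𝒰, V ⊆ U}, ⟨fun V hV => hℬ.isOpen hV.1, ?_⟩, fun V hV => hV.1,
    fun V hV => hV.2⟩
  refine Set.eq_univ_of_forall fun x => ?_
  obtain ⟨U, hU, hxU⟩ := h𝒰.2.ge (Set.mem_univ x)
  obtain ⟨V, hV, hxV, hVU⟩ := hℬ.exists_subset_of_mem_open hxU (h𝒰.1 U hU)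
  exact ⟨V, ⟨hV, U, hU, hVU⟩, hxV⟩

theorem relativelyCompact_of_forall_subset_basis {ℬ : Set (Set X)} (hℬ : IsTopologicalBasis ℬ)
    {K : Set X} (hK : ∀ 𝒱 ∈ openCovers X, 𝒱 ⊆ ℬ →
      ∃ ℱ : Set (Set X), ℱ.Finite ∧ ℱ ⊆ 𝒱 ∧ K ⊆ ⋃₀ ℱ) :
    RelativelyCompact K := by
  intro 𝒰 h𝒰
  obtain ⟨𝒱, h𝒱, h𝒱ℬ, hrefine⟩ := exists_openCover_subset_basis_refining hℬ h𝒰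
  obtain ⟨ℱ, hfin, hℱ𝒱, hKℱ⟩ := hK 𝒱 h𝒱 h𝒱ℬ
  choose! enlarge henlarge hle using hrefine
  refine ⟨enlarge '' ℱ, hfin.image _, ?_, hKℱ.trans ?_⟩
  · exact Set.image_subset_iff.2 fun V hV => henlarge V (hℱ𝒱 hV)
  · exact Set.sUnion_subset fun V hV =>
      (hle V (hℱ𝒱 hV)).trans (Set.subset_sUnion_of_mem (Set.mem_image_of_mem _ hV))

theorem WinStratFin.exists_relativelyCompact_iUnion_eq_univ [SecondCountableTopology X]
    (h : WinStratFin (openCovers X) (openCovers X)) :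
    ∃ K : ℕ → Set X, (∀ n, RelativelyCompact (K n)) ∧ ⋃ n, K n = Set.univ := by
  obtain ⟨σ, hσ, hwin⟩ := h
  obtain ⟨ℬ, hℬc, -, hℬ⟩ := exists_countable_basis X
  let 𝒞 : Set (Set (Set X)) := {𝒱 ∈ openCovers X | 𝒱 ⊆ ℬ}
  let reply (n : ℕ) (s : Fin (n + 1) → 𝒞) : Set (Set X) := σ n fun i => s i
  have hlegal (n) (s : Fin (n + 1) → 𝒞) : (reply n s).Finite ∧ reply n s ⊆ s (Fin.last n) :=
    hσ n _ fun i => (s i).2.1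
  have hreply (n) (s : Fin n → 𝒞) (𝒱 : 𝒞) :
      (reply n (Fin.snoc s 𝒱)).Finite ∧ reply n (Fin.snoc s 𝒱) ⊆ 𝒱 := by
    simpa only [Fin.snoc_last] using hlegal n (Fin.snoc s 𝒱)
  have hcount (n) (s : Fin n → 𝒞) :
      (Set.range fun 𝒱 => ⋃₀ reply n (Fin.snoc s 𝒱)).Countable := by
    refine ((Set.countable_ofPred_finite_subset hℬc).image Set.sUnion).mono ?_
    rintro _ ⟨𝒱, rfl⟩
    exact ⟨_, ⟨(hreply n s 𝒱).1, (hreply n s 𝒱).2.trans 𝒱.2.2⟩, rfl⟩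
  obtain ⟨p, hp⟩ := exists_seq_position_forall_mem_reply (τ := fun n s => ⋃₀ reply n s) hcount
    fun 𝒱 x => by
      simpa only [Set.sUnion_iUnion, Set.mem_iUnion] using
        (hwin (fun n => 𝒱 n) fun n => (𝒱 n).2.1).2.ge (Set.mem_univ x)
  refine ⟨fun k => ⋂ 𝒱, ⋃₀ reply (p k).1 (Fin.snoc (p k).2 𝒱), fun k => ?_, ?_⟩
  · refine relativelyCompact_of_forall_subset_basis hℬ fun 𝒱 h𝒱 h𝒱ℬ => ?_
    obtain ⟨hfin, hsub⟩ := hreply _ (p k).2 ⟨𝒱, h𝒱, h𝒱ℬ⟩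
    exact ⟨_, hfin, hsub, Set.iInter_subset _ _⟩
  · exact Set.eq_univ_of_forall fun x => Set.mem_iUnion.2 <|
      (hp x).imp fun k hk => Set.mem_iInter.2 hk

end Menger

/-- for second-countable `X`, II wins the Menger game
`G_fin(𝒪_X, 𝒪_X)` iff II wins it with a Markov strategy. -/
theorem statement15 (X : Type*) [TopologicalSpace X] [SecondCountableTopology X] :
    WinStratFin (openCovers X) (openCovers X) ↔
      WinMarkovFin (openCovers X) (openCovers X) := by
  refine ⟨fun h => ?_, WinMarkovFin.winStratFin⟩
  obtain ⟨K, hK, hcover⟩ := h.exists_relativelyCompact_iUnion_eq_univ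
  exact winMarkovFin_openCovers_of_iUnion_eq_univ hK hcover
end

section
/- For any completely regular Hausdorff (Tychonoff) topological space X, the following are equivalent: (i) Player II has a winning strategy in the ω-Rothberger game G_1(Ω_X, Ω_X); (ii) for every f ∈ C_p(X), Player II has a winning strategy in the strong countable fan tightness game G_1(ℬ_{C_p(X),f}, ℬ_{C_p(X),f}); (iii) for every f ∈ C_p(X), Player II has a winning strategy in the strong countable dense fan tightness game G_1(𝒟_{C_p(X)}, ℬ_{C_p(X),f}). -/
open TopologicalSpace Cardinal

/-!
A function `g` is `ε`-close to `f` on a finite set `F` exactly when `F` is contained in the open set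
of points where `g` and `f` differ by less than `ε`. So `f` lies in the closure of a family `A` iff
for every `ε > 0` these open sets, as `g` ranges over `A`, form an ω-cover, and a winning strategy
on ω-covers becomes, for each fixed `ε`, a strategy for the game at `f`. Playing countably many such
strategies on interleaved subsequences of innings handles all `ε = 1 / (n + 1)` at once.

Conversely, an ω-cover `𝒰` is sent to the family of those `g` that agree with `f + 1` off some
member of `𝒰`; complete regularity makes this family dense. If such functions accumulate at `f`,
then on any given finite set one of them is less than `1` away from `f`, so the finite set lies in
the corresponding member of `𝒰`.
-/

section SelectionGames

variable {Y Z : Type*}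

theorem WinStratOne.mono {𝒜 𝒜' ℬ ℬ' : Set (Set Y)} (h : WinStratOne 𝒜 ℬ) (h𝒜 : 𝒜' ⊆ 𝒜)
    (hℬ : ℬ ⊆ ℬ') : WinStratOne 𝒜' ℬ' := by
  obtain ⟨σ, legal, wins⟩ := h
  exact ⟨σ, fun n s hs => legal n s fun i => h𝒜 (hs i), fun A hA => hℬ (wins A fun n => h𝒜 (hA n))⟩

theorem WinStratOne.translate [Nonempty Y] {𝒜 ℬ : Set (Set Z)} {𝒜' ℬ' : Set (Set Y)}
    (h : WinStratOne 𝒜 ℬ) (T : Set Y → Set Z) (R : Y → Z → Prop) (hT : Set.MapsTo T 𝒜' 𝒜)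
    (hR : ∀ A ∈ 𝒜', ∀ z ∈ T A, ∃ y ∈ A, R y z)
    (hℬ : ∀ B ∈ ℬ, ∀ C, (∀ b ∈ B, ∃ c ∈ C, R c b) → (∀ c ∈ C, ∃ b ∈ B, R c b) → C ∈ ℬ') :
    WinStratOne 𝒜' ℬ' := by
  obtain ⟨σ, legal, wins⟩ := h
  choose! pull pull_mem pull_rel using hR
  have legal_image (n : ℕ) (s : Fin (n + 1) → Set Y) (hs : ∀ i, s i ∈ 𝒜') :
      σ n (fun i => T (s i)) ∈ T (s (Fin.last n)) :=
    legal n _ fun i => hT (hs i)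
  refine ⟨fun n s => pull (s (Fin.last n)) (σ n fun i => T (s i)),
    fun n s hs => pull_mem _ (hs _) _ (legal_image n s hs), fun A hA => ?_⟩
  have related (n : ℕ) : R (pull (A n) (σ n fun i => T (A i))) (σ n fun i => T (A i)) :=
    pull_rel _ (hA n) _ (legal_image n _ fun i => hA i)
  refine hℬ _ (wins (fun n => T (A n)) fun n => hT (hA n)) _ ?_ ?_
  · rintro _ ⟨n, rfl⟩
    exact ⟨_, ⟨n, rfl⟩, related n⟩
  · rintro _ ⟨n, rfl⟩
    exact ⟨_, ⟨n, rfl⟩, related n⟩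

theorem WinStratOne.preimage_image [Nonempty Y] {𝒜 ℬ : Set (Set Z)} (h : WinStratOne 𝒜 ℬ)
    (φ : Y → Z) : WinStratOne (Set.image φ ⁻¹' 𝒜) (Set.image φ ⁻¹' ℬ) := by
  refine h.translate (Set.image φ) (fun y z => φ y = z) (fun _ hA => hA)
    (fun _ _ _ hz => hz) fun B hB C hBC hCB => ?_
  have image_eq : φ '' C = B := by
    refine Set.Subset.antisymm ?_ hBC
    rintro _ ⟨c, hc, rfl⟩
    obtain ⟨b, hb, rfl⟩ := hCB c hc
    exact hb
  exact Set.mem_preimage.2 (image_eq ▸ hB)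

theorem WinStratOne.iInter {ι : Type*} [Countable ι] [Nonempty ι] {𝒜 : Set (Set Y)}
    {ℬ : ι → Set (Set Y)} (h : ∀ k, WinStratOne 𝒜 (ℬ k)) (hℬ : ∀ k, IsUpperSet (ℬ k)) :
    WinStratOne 𝒜 (⋂ k, ℬ k) := by
  choose σ legal wins using h
  obtain ⟨e, he⟩ := exists_surjective_nat ι
  -- Inning `Nat.pair a j` of the combined game is inning `j` of the game for `ℬ (e a)`.
  have earlier (n : ℕ) (i : Fin (n.unpair.2 + 1)) : Nat.pair n.unpair.1 i < n + 1 := by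
    have pair_mono : StrictMono (Nat.pair n.unpair.1) := fun _ _ => Nat.pair_lt_pair_right _
    calc Nat.pair n.unpair.1 i ≤ Nat.pair n.unpair.1 n.unpair.2 :=
          pair_mono.monotone (Nat.le_of_lt_succ i.2)
      _ = n := Nat.pair_unpair n
      _ < n + 1 := n.lt_succ_self
  refine ⟨fun n s => σ (e n.unpair.1) n.unpair.2 fun i => s ⟨Nat.pair n.unpair.1 i, earlier n i⟩,
    fun n s hs => ?_, fun A hA => Set.mem_iInter.2 fun k => ?_⟩
  · have current : (⟨Nat.pair n.unpair.1 n.unpair.2, earlier n (Fin.last _)⟩ : Fin (n + 1)) =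
        Fin.last n := Fin.ext (Nat.pair_unpair n)
    exact current ▸ legal _ _ _ fun i => hs _
  · obtain ⟨a, rfl⟩ := he k
    refine hℬ (e a) ?_ (wins (e a) (fun j => A (Nat.pair a j)) fun j => hA _)
    rintro _ ⟨j, rfl⟩
    refine ⟨Nat.pair a j, ?_⟩
    dsimp only
    rw [Nat.unpair_pair]

end SelectionGames

section OmegaCovers

variable {X : Type*} [TopologicalSpace X]

theorem isOmegaCover_iff {𝒰 : Set (Set X)} :
    IsOmegaCover 𝒰 ↔ (∀ U ∈ 𝒰, IsOpen U) ∧ ∀ F : Set X, F.Finite → ∃ U ∈ 𝒰, F ⊆ U := by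
  refine ⟨fun h => ⟨h.1, h.2.2⟩, fun h => ⟨h.1, Set.sUnion_eq_univ_iff.2 fun x => ?_, h.2⟩⟩
  simpa only [Set.singleton_subset_iff] using h.2 {x} (Set.finite_singleton x)

/-- The set of points where `g` is `ε`-close to `f`. For fixed `f` and `ε` it translates families of
functions into families of open sets. -/
def Cp.closeSet (f : Cp X) (ε : ℝ) (g : Cp X) : Set X :=
  {x | dist (g.1 x) (f.1 x) < ε}

theorem Cp.isOpen_closeSet (f : Cp X) (ε : ℝ) (g : Cp X) : IsOpen (Cp.closeSet f ε g) :=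
  isOpen_lt (g.2.dist f.2) continuous_const

theorem Cp.monotone_closeSet (f g : Cp X) : Monotone fun ε => Cp.closeSet f ε g :=
  fun _ _ hε _ hx => lt_of_lt_of_le hx hε

theorem Cp.isOmegaCover_image_closeSet_iff {f : Cp X} {ε : ℝ} {A : Set (Cp X)} :
    IsOmegaCover (Cp.closeSet f ε '' A) ↔
      ∀ F : Set X, F.Finite → ∃ g ∈ A, F ⊆ Cp.closeSet f ε g := by
  simp only [isOmegaCover_iff, Set.forall_mem_image, Set.exists_mem_image, Cp.isOpen_closeSet,
    implies_true, true_and]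

theorem Cp.isUpperSet_preimage_image_closeSet (f : Cp X) (ε : ℝ) :
    IsUpperSet (Set.image (Cp.closeSet f ε) ⁻¹' omegaCovers X) := by
  intro A B hAB hA
  refine Cp.isOmegaCover_image_closeSet_iff.2 fun F hF => ?_
  obtain ⟨g, hg, hFg⟩ := Cp.isOmegaCover_image_closeSet_iff.1 hA F hF
  exact ⟨g, hAB hg, hFg⟩

theorem Cp.hasBasis_nhds (f : Cp X) :
    (nhds f).HasBasis (fun p : Set X × ℝ => p.1.Finite ∧ 0 < p.2)
      (fun p => {g | p.1 ⊆ Cp.closeSet f p.2 g}) := by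
  rw [nhds_subtype_eq_comap, nhds_pi]
  refine (Filter.hasBasis_pi_same_index (fun x => Metric.nhds_basis_ball (x := f.1 x))
    fun F r hF hr => ?_).comap Subtype.val
  have small : ∀ᶠ ε in nhdsWithin (0 : ℝ) (Set.Ioi 0), ∀ x ∈ F, ε ≤ r x :=
    (Filter.eventually_all_finite hF).2 fun x hx =>
      Filter.mem_of_superset (Ioc_mem_nhdsGT (hr x hx)) fun _ hε => hε.2
  obtain ⟨ε, hεr, hε⟩ := (small.and self_mem_nhdsWithin).exists
  exact ⟨ε, hε, fun x hx => Metric.ball_subset_ball (hεr x hx)⟩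

theorem Cp.mem_closure_iff {f : Cp X} {A : Set (Cp X)} :
    f ∈ closure A ↔ ∀ ε > 0, ∀ F : Set X, F.Finite → ∃ g ∈ A, F ⊆ Cp.closeSet f ε g := by
  rw [mem_closure_iff_nhds_basis (Cp.hasBasis_nhds f)]
  exact ⟨fun h ε hε F hF => h (F, ε) ⟨hF, hε⟩, fun h p hp => h p.2 hp.2 p.1 hp.1⟩

theorem Cp.blades_eq_iInter (f : Cp X) :
    blades (Cp X) f =
      ⋂ n : ℕ, Set.image (Cp.closeSet f (1 / ((n : ℝ) + 1))) ⁻¹' omegaCovers X := by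
  ext A
  simp only [Set.mem_iInter, Set.mem_preimage, omegaCovers, blades, Set.mem_ofPred_eq,
    Cp.isOmegaCover_image_closeSet_iff, Cp.mem_closure_iff]
  refine ⟨fun h n => h _ Nat.one_div_pos_of_nat, fun h ε hε F hF => ?_⟩
  obtain ⟨n, hn⟩ := exists_nat_one_div_lt hε
  obtain ⟨g, hg, hFg⟩ := h n F hF
  exact ⟨g, hg, hFg.trans (Cp.monotone_closeSet f g hn.le)⟩

theorem WinStratOne.blades_of_omegaCovers (h : WinStratOne (omegaCovers X) (omegaCovers X))
    (f : Cp X) : WinStratOne (blades (Cp X) f) (blades (Cp X) f) := by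
  have : Nonempty (Cp X) := ⟨f⟩
  rw [Cp.blades_eq_iInter]
  exact WinStratOne.iInter
    (fun n => (h.preimage_image _).mono (Set.iInter_subset _ n) subset_rfl)
    fun n => Cp.isUpperSet_preimage_image_closeSet f _

end OmegaCovers

section CompletelyRegular

variable {X : Type*} [TopologicalSpace X] [CompletelyRegularSpace X]

theorem exists_continuous_eqOn_zero_eqOn_one {F K : Set X} (hF : F.Finite) (hK : IsClosed K)
    (hFK : Disjoint F K) : ∃ φ : X → ℝ, Continuous φ ∧ Set.EqOn φ 0 F ∧ Set.EqOn φ 1 K := by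
  have separate_point : ∀ x ∈ F, ∃ k : X → ℝ, Continuous k ∧ k x = 0 ∧ Set.EqOn k 1 K := by
    intro x hx
    obtain ⟨k, hk, hk0, hk1⟩ := CompletelyRegularSpace.completely_regular x K hK
      (Set.disjoint_left.1 hFK hx)
    exact ⟨fun y => k y, by fun_prop, by simp [hk0], fun y hy => by simp [hk1 hy]⟩
  choose! k hk hk0 hk1 using separate_point
  simp only [← hF.mem_toFinset] at hk hk0 hk1
  exact ⟨fun y => ∏ x ∈ hF.toFinset, k x y, continuous_finsetProd _ hk,
    fun y hy => Finset.prod_eq_zero (hF.mem_toFinset.2 hy) (hk0 y (hF.mem_toFinset.2 hy)),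
    fun y hy => Finset.prod_eq_one fun x hx => hk1 x hx hy⟩

theorem Cp.exists_eqOn_eqOn {F K : Set X} (hF : F.Finite) (hK : IsClosed K) (hFK : Disjoint F K)
    (f g : Cp X) : ∃ k : Cp X, Set.EqOn k.1 f.1 F ∧ Set.EqOn k.1 g.1 K := by
  obtain ⟨φ, hφ, hφF, hφK⟩ := exists_continuous_eqOn_zero_eqOn_one hF hK hFK
  have hf := f.2
  have hg := g.2
  exact ⟨⟨fun x => (1 - φ x) * f.1 x + φ x * g.1 x, by fun_prop⟩,
    fun x hx => by simp [hφF hx], fun x hx => by simp [hφK hx]⟩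

theorem IsOmegaCover.dense_eqOn_compl {𝒰 : Set (Set X)} (h𝒰 : IsOmegaCover 𝒰) (g : Cp X) :
    Dense {k : Cp X | ∃ U ∈ 𝒰, Set.EqOn k.1 g.1 Uᶜ} := by
  refine fun f => Cp.mem_closure_iff.2 fun ε hε F hF => ?_
  obtain ⟨U, hU, hFU⟩ := h𝒰.2.2 F hF
  obtain ⟨k, hkf, hkg⟩ := Cp.exists_eqOn_eqOn hF (h𝒰.1 U hU).isClosed_compl
    (Set.disjoint_compl_right_iff_subset.2 hFU) f g
  exact ⟨k, ⟨U, hU, hkg⟩, fun x hx => by simpa [Cp.closeSet, hkf hx] using hε⟩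

theorem WinStratOne.omegaCovers_of_denseFamily {f : Cp X}
    (h : WinStratOne (denseFamily (Cp X)) (blades (Cp X) f)) :
    WinStratOne (omegaCovers X) (omegaCovers X) := by
  let f_add_one : Cp X := ⟨fun x => f.1 x + 1, f.2.add continuous_const⟩
  refine h.translate (fun 𝒰 => {g | ∃ U ∈ 𝒰, Set.EqOn g.1 f_add_one.1 Uᶜ})
    (fun U g => IsOpen U ∧ Set.EqOn g.1 f_add_one.1 Uᶜ)
    (fun 𝒰 h𝒰 => IsOmegaCover.dense_eqOn_compl h𝒰 f_add_one) ?_ ?_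
  · rintro 𝒰 h𝒰 g ⟨U, hU, hgU⟩
    exact ⟨U, hU, h𝒰.1 U hU, hgU⟩
  · intro B hB C hBC hCB
    have isOpen_mem : ∀ U ∈ C, IsOpen U := fun U hU =>
      let ⟨_, _, hUo, _⟩ := hCB U hU
      hUo
    refine isOmegaCover_iff.2 ⟨isOpen_mem, fun F hF => ?_⟩
    obtain ⟨g, hg, hFg⟩ := Cp.mem_closure_iff.1 hB 1 one_pos F hF
    obtain ⟨U, hU, -, hgU⟩ := hBC g hg
    refine ⟨U, hU, fun x hx => by_contra fun hxU => ?_⟩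
    have far : dist (g.1 x) (f.1 x) = 1 := by simp [hgU hxU, f_add_one]
    exact (hFg hx).ne far

end CompletelyRegular

theorem statement17_general (X : Type*) [TopologicalSpace X] [CompletelyRegularSpace X]
    (f : Cp X) :
    List.TFAE [WinStratOne (omegaCovers X) (omegaCovers X),
      WinStratOne (blades (Cp X) f) (blades (Cp X) f),
      WinStratOne (denseFamily (Cp X)) (blades (Cp X) f)] := by
  tfae_have 1 → 2 := fun h => h.blades_of_omegaCovers f
  tfae_have 2 → 3 := fun h => h.mono (fun _ hD => hD f) subset_rfl
  tfae_have 3 → 1 := WinStratOne.omegaCovers_of_denseFamily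
  tfae_finish

/-- For Tychonoff `X`, TFAE: (i) II wins the ω-Rothberger game
`G_1(Ω_X, Ω_X)`; (ii) II wins the strong countable fan tightness game at every
`f ∈ C_p(X)`; (iii) II wins the strong countable dense fan tightness game at
every `f ∈ C_p(X)`. -/
theorem statement17 (X : Type*) [TopologicalSpace X] [T35Space X] :
    List.TFAE [WinStratOne (omegaCovers X) (omegaCovers X),
      ∀ f : Cp X, WinStratOne (blades (Cp X) f) (blades (Cp X) f),
      ∀ f : Cp X, WinStratOne (denseFamily (Cp X)) (blades (Cp X) f)] := by
  have : Nonempty (Cp X) := ⟨⟨fun _ => 0, continuous_const⟩⟩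
  simpa only [List.map, forall_const] using
    List.forall_tfae [fun _ => _, fun _ => _, fun _ => _] (statement17_general X)
end

section
/- Let 𝒜 be a family of sets such that ⋃𝒜 is countable, and let ℬ be a family of sets closed under supersets (if B ∈ ℬ and B ⊆ C then C ∈ ℬ). Then Player II has a winning strategy in the strong selection game G_1(𝒜,ℬ) if and only if Player II has a winning Markov strategy in G_1(𝒜,ℬ). -/
open TopologicalSpace Cardinal

/-! Let `σ` be a winning strategy for II. Since II can answer with only countably many points, a
countable tree of positions already realizes every answer: at each of its positions, any move of I
can be replaced by a move that stays in the tree and draws the same answer from `σ`. Enumerate the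
tree, and in round `k` let the Markov strategy answer as `σ` would if the move were made at the
`k`-th position. Against I's moves `A 0, A 1, …`, climb the tree from the root by replacing, at the
`k`-th position, the move `A k`. The resulting branch is a play against `σ` all of whose answers
are among the Markov answers, so the latter form a superset of a member of `ℬ`. -/

section ReplyTree

variable {M α : Type*} (σ : (n : ℕ) → (Fin (n + 1) → M) → α)

/-- II's answer under `σ` to the move `A` made at the position `s`, the finite sequence of I's
earlier moves. -/
def replyAt {n : ℕ} (s : Fin n → M) (A : M) : α :=
  σ n (Fin.snoc (α := fun _ => M) s A)

/-- A chosen representative of the moves that draw the same reply as `A` at the position `s`. -/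
noncomputable def replyRep {n : ℕ} (s : Fin n → M) (A : M) : M :=
  Set.rangeSplitting (replyAt σ s) (Set.rangeFactorization (replyAt σ s) A)

theorem replyAt_replyRep {n : ℕ} (s : Fin n → M) (A : M) :
    replyAt σ s (replyRep σ s A) = replyAt σ s A :=
  Set.apply_rangeSplitting _ _

theorem countable_range_replyRep {n : ℕ} {s : Fin n → M}
    (hs : (Set.range (replyAt σ s)).Countable) : (Set.range (replyRep σ s)).Countable := by
  have : Countable (Set.range (replyAt σ s)) := hs
  exact (Set.countable_range (Set.rangeSplitting (replyAt σ s))).mono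
    (Set.range_comp_subset_range _ _)

/-- The positions of each length in which every move is the representative, at the position where
it is made, of some move: the subtree of the game that realizes all replies of `σ`. -/
def replyTree : (n : ℕ) → Set (Fin n → M)
  | 0 => Set.univ
  | n + 1 => ⋃ s ∈ replyTree n, Fin.snoc (α := fun _ => M) s '' Set.range (replyRep σ s)

theorem snoc_replyRep_mem_replyTree {n : ℕ} {s : Fin n → M} (hs : s ∈ replyTree σ n) (A : M) :
    Fin.snoc (α := fun _ => M) s (replyRep σ s A) ∈ replyTree σ (n + 1) :=
  Set.mem_biUnion hs (Set.mem_image_of_mem _ (Set.mem_range_self A))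

variable {σ} in
theorem countable_replyTree
    (hσ : ∀ (n : ℕ) (s : Fin n → M), (Set.range (replyAt σ s)).Countable) (n : ℕ) :
    (replyTree σ n).Countable := by
  induction n with
  | zero => exact Set.countable_univ
  | succ n ih => exact ih.biUnion fun s _ => (countable_range_replyRep σ (hσ n s)).image _

/-- The infinite sequence of moves produced by the rule `g`, which determines each move from the
finite sequence of the earlier ones. -/
def playOf (g : (n : ℕ) → (Fin n → M) → M) : ℕ → M
  | n => g n fun i => playOf g i

theorem playOf_eq (g : (n : ℕ) → (Fin n → M) → M) (n : ℕ) :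
    playOf g n = g n fun i => playOf g i := by
  rw [playOf]

theorem exists_branch_replyTree (F : (n : ℕ) → (Fin n → M) → M) :
    ∃ B : ℕ → M, ∀ n, (fun i : Fin n => B i) ∈ replyTree σ n ∧
      σ n (fun i => B i) = replyAt σ (fun i : Fin n => B i) (F n fun i => B i) := by
  let B := playOf fun n s => replyRep σ s (F n s)
  have B_eq (n : ℕ) : B n = replyRep σ (fun i : Fin n => B i) (F n fun i => B i) :=
    playOf_eq _ n
  have snoc_eq (n : ℕ) : Fin.snoc (α := fun _ => M) (fun i : Fin n => B i)
      (replyRep σ (fun i : Fin n => B i) (F n fun i => B i)) = fun i : Fin (n + 1) => B i := by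
    rw [← B_eq]
    exact Fin.snoc_init_self fun i : Fin (n + 1) => B i
  have mem_tree (n : ℕ) : (fun i : Fin n => B i) ∈ replyTree σ n := by
    induction n with
    | zero => exact Set.mem_univ _
    | succ n ih => exact snoc_eq n ▸ snoc_replyRep_mem_replyTree σ ih _
  refine ⟨B, fun n => ⟨mem_tree n, ?_⟩⟩
  rw [← replyAt_replyRep, replyAt, snoc_eq]

variable {σ} in
theorem exists_positions_forall_exists_play
    (hσ : ∀ (n : ℕ) (s : Fin n → M), (Set.range (replyAt σ s)).Countable) :
    ∃ p : ℕ → (n : ℕ) × (Fin n → M), ∀ A : ℕ → M, ∃ B : ℕ → M,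
      ∀ n, ∃ k, σ n (fun i => B i) = replyAt σ (p k).2 (A k) := by
  let T : Set ((n : ℕ) × (Fin n → M)) := ⋃ n, Sigma.mk n '' replyTree σ n
  have mem_T {n : ℕ} {s : Fin n → M} (hs : s ∈ replyTree σ n) : ⟨n, s⟩ ∈ T :=
    Set.mem_iUnion_of_mem n (Set.mem_image_of_mem _ hs)
  have T_countable : T.Countable :=
    Set.countable_iUnion fun n => (countable_replyTree hσ n).image _
  have T_nonempty : T.Nonempty := ⟨⟨0, Fin.elim0⟩, mem_T (Set.mem_univ _)⟩
  obtain ⟨p, hp⟩ := T_countable.exists_eq_range T_nonempty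
  refine ⟨p, fun A => ?_⟩
  obtain ⟨B, hB⟩ := exists_branch_replyTree σ fun n s => A (Function.invFun p ⟨n, s⟩)
  refine ⟨B, fun n => ⟨Function.invFun p ⟨n, fun i => B i⟩, ?_⟩⟩
  have p_index : p (Function.invFun p ⟨n, fun i => B i⟩) = ⟨n, fun i => B i⟩ :=
    Function.invFun_eq (Set.mem_range.1 (hp ▸ mem_T (hB n).1))
  rw [p_index]
  exact (hB n).2

end ReplyTree

section SelectionGame

variable {α : Type*} {𝒜 ℬ : Set (Set α)}

theorem WinStratOne.winMarkovOne (h𝒜 : (⋃₀ 𝒜).Countable) (hℬ : IsUpperSet ℬ)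
    (h : WinStratOne 𝒜 ℬ) : WinMarkovOne 𝒜 ℬ := by
  obtain ⟨σ, σ_legal, σ_wins⟩ := h
  let τ (n : ℕ) (s : Fin (n + 1) → 𝒜) : α := σ n fun i => s i
  have reply_mem {n : ℕ} (s : Fin n → 𝒜) (A : 𝒜) : replyAt τ s A ∈ (A : Set α) := by
    simpa only [τ, replyAt, Fin.snoc_last] using
      σ_legal n (fun i => Fin.snoc (α := fun _ => 𝒜) s A i) fun i => Subtype.coe_prop _
  have reply_countable (n : ℕ) (s : Fin n → 𝒜) : (Set.range (replyAt τ s)).Countable :=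
    h𝒜.mono <| Set.range_subset_iff.2 fun A => Set.mem_sUnion_of_mem (reply_mem s A) A.2
  obtain ⟨p, hp⟩ := exists_positions_forall_exists_play reply_countable
  let μ (A : Set α) (k : ℕ) : α := replyAt σ (fun i => ((p k).2 i : Set α)) A
  have μ_eq (A : 𝒜) (k : ℕ) : μ A k = replyAt τ (p k).2 A :=
    congrArg (σ (p k).1) (Fin.comp_snoc Subtype.val (p k).2 A).symm
  refine ⟨μ, fun A hA k => μ_eq ⟨A, hA⟩ k ▸ reply_mem _ ⟨A, hA⟩, fun A hA => ?_⟩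
  obtain ⟨B, hB⟩ := hp fun k => ⟨A k, hA k⟩
  refine hℬ ?_ (σ_wins (fun n => B n) fun n => (B n).2)
  rintro x ⟨n, rfl⟩
  obtain ⟨k, hk⟩ := hB n
  exact ⟨k, hk.trans (μ_eq ⟨A k, hA k⟩ k).symm⟩

theorem WinMarkovOne.winStratOne (h : WinMarkovOne 𝒜 ℬ) : WinStratOne 𝒜 ℬ := by
  obtain ⟨μ, μ_legal, μ_wins⟩ := h
  exact ⟨fun n s => μ (s (Fin.last n)) n, fun n s hs => μ_legal _ (hs _) n, μ_wins⟩

end SelectionGame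

/-- if `⋃𝒜` is countable and `ℬ` is closed under supersets, then
II wins `G_1(𝒜, ℬ)` iff II wins it with a Markov strategy. -/
theorem statement18 {α : Type*} (𝒜 ℬ : Set (Set α))
    (h𝒜 : (⋃₀ 𝒜).Countable)
    (hℬ : ∀ B ∈ ℬ, ∀ C : Set α, B ⊆ C → C ∈ ℬ) :
    WinStratOne 𝒜 ℬ ↔ WinMarkovOne 𝒜 ℬ := by
  have ℬ_upper : IsUpperSet ℬ := fun B C hBC hB => hℬ B hB C hBC
  exact ⟨WinStratOne.winMarkovOne h𝒜 ℬ_upper, WinMarkovOne.winStratOne⟩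
end

section
/- For a second-countable topological space X, Player II has a winning strategy in the Rothberger game G_1(𝒪_X, 𝒪_X) if and only if Player II has a winning Markov strategy in G_1(𝒪_X, 𝒪_X). -/
/-!
At a fixed position, II's strategy is a map `τ` selecting a member of each open cover. Some point
`x` has all its open neighbourhoods among the values of `τ`: otherwise each `x` has an open
neighbourhood `U x` that is not a value of `τ`, and the cover `{U x | x}` leaves `τ` no answer. If
the intersection `nhdsKer {x}` of these neighbourhoods is a Gδ set, it is the intersection of II's
answers to countably many covers. Restricting I to such covers at every position yields a countable
tree of positions, hence countably many points `x`. I could avoid a point outside all of their sets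
`nhdsKer {x}` throughout a play in the tree, so these sets cover `X`. Now II wins with a Markov
strategy by covering, in round `n`, the `n`-th of the points.
-/

open TopologicalSpace Cardinal

theorem WinMarkovOne.winStratOne_s19 {X : Type*} {𝒜 ℬ : Set (Set X)} :
    WinMarkovOne 𝒜 ℬ → WinStratOne 𝒜 ℬ := by
  rintro ⟨σ, hσ, hwin⟩
  exact ⟨fun n s => σ (s (Fin.last n)) n, fun n _ hs => hσ _ (hs _) n, hwin⟩

/-- The positions of length `n` that arise in a game when I's move at each position `s` of length
`m` is restricted to `S m s`; a position records I's moves only, as these determine II's answers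
once II's strategy is fixed. -/
def positions {α : Type*} (S : ∀ n, (Fin n → α) → Set α) : ∀ n, Set (Fin n → α)
  | 0 => Set.univ
  | n + 1 => ⋃ s ∈ positions S n, Fin.snoc s '' S n s

section positions

variable {α : Type*} {S : ∀ n, (Fin n → α) → Set α}

theorem countable_positions (hS : ∀ n s, (S n s).Countable) : ∀ n, (positions S n).Countable
  | 0 => Set.countable_univ
  | n + 1 => (countable_positions hS n).biUnion fun s _ => (hS n s).image _

theorem snoc_mem_positions {n : ℕ} {s : Fin n → α} {a : α} (hs : s ∈ positions S n)
    (ha : a ∈ S n s) : (Fin.snoc s a : Fin (n + 1) → α) ∈ positions S (n + 1) :=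
  Set.mem_biUnion hs (Set.mem_image_of_mem _ ha)

theorem exists_play_of_forall_positions {p : ∀ n, (Fin (n + 1) → α) → Prop}
    (h : ∀ n, ∀ s ∈ positions S n, ∃ a ∈ S n s, p n (Fin.snoc s a)) :
    ∃ A : ℕ → α, ∀ n, p n fun i => A i := by
  choose move move_mem hmove using h
  let pos : ∀ n, positions S n := fun n =>
    Nat.rec ⟨Fin.elim0, trivial⟩
      (fun n s => ⟨Fin.snoc s.1 (move n s.1 s.2), snoc_mem_positions s.2 (move_mem n s.1 s.2)⟩) n
  let A : ℕ → α := fun n => move n (pos n).1 (pos n).2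
  have snoc_prefix (n : ℕ) :
      (Fin.snoc (fun i : Fin n => A i) (A n) : Fin (n + 1) → α) = fun i : Fin (n + 1) => A i :=
    Fin.snoc_init_self (fun i : Fin (n + 1) => A i)
  have pos_eq (n : ℕ) : (pos n).1 = fun i : Fin n => A i := by
    induction n with
    | zero => exact Subsingleton.elim _ _
    | succ n ih => rw [← snoc_prefix, ← ih]
  refine ⟨A, fun n => ?_⟩
  rw [← snoc_prefix, ← pos_eq]
  exact hmove n (pos n).1 (pos n).2

end positions

section Rothberger

variable {X : Type*} [TopologicalSpace X]

theorem range_mem_openCovers {ι : Type*} {U : ι → Set X} (hU : ∀ i, IsOpen (U i))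
    (h_cover : ⋃ i, U i = Set.univ) : Set.range U ∈ openCovers X :=
  ⟨Set.forall_mem_range.2 hU, by rwa [Set.sUnion_range]⟩

theorem exists_mem_of_mem_openCovers {𝒰 : Set (Set X)} (h𝒰 : 𝒰 ∈ openCovers X) (x : X) :
    ∃ U ∈ 𝒰, x ∈ U :=
  Set.mem_sUnion.1 (h𝒰.2 ▸ Set.mem_univ x)

theorem exists_forall_isOpen_mem_range {τ : openCovers X → Set X} (hτ : ∀ 𝒰, τ 𝒰 ∈ 𝒰.1) :
    ∃ x, ∀ U, IsOpen U → x ∈ U → U ∈ Set.range τ := by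
  by_contra! hτ_omits
  choose U hU hxU hU_notMem using hτ_omits
  have hU_cover : ⋃ x, U x = Set.univ :=
    Set.eq_univ_of_forall fun x => Set.mem_iUnion_of_mem x (hxU x)
  obtain ⟨x, hx⟩ := hτ ⟨Set.range U, range_mem_openCovers hU hU_cover⟩
  exact hU_notMem x ⟨_, hx.symm⟩

theorem exists_countable_iInter_eq_nhdsKer (hX : ∀ x : X, IsGδ (nhdsKer {x}))
    {τ : openCovers X → Set X} (hτ : ∀ 𝒰, τ 𝒰 ∈ 𝒰.1) :
    ∃ (x : X) (S : Set (openCovers X)), S.Countable ∧ ⋂ 𝒰 ∈ S, τ 𝒰 = nhdsKer {x} := by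
  obtain ⟨x, hx⟩ := exists_forall_isOpen_mem_range hτ
  obtain ⟨T, hT_open, hT_countable, hT⟩ := hX x
  have hx_mem : x ∈ ⋂₀ T := hT ▸ subset_nhdsKer rfl
  have hT_surjOn : Set.SurjOn τ Set.univ T := fun U hU =>
    Set.image_univ ▸ hx U (hT_open U hU) (hx_mem U hU)
  obtain ⟨S, -, hS_inj, rfl⟩ := hT_surjOn.exists_subset_injOn_image_eq
  exact ⟨x, S, Set.countable_of_injective_of_countable_image hS_inj hT_countable,
    by rw [hT, Set.sInter_image]⟩

theorem WinStratOne.exists_seq_nhdsKer_range_eq_univ (hX : ∀ x : X, IsGδ (nhdsKer {x}))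
    (h : WinStratOne (openCovers X) (openCovers X)) :
    ∃ d : ℕ → X, nhdsKer (Set.range d) = Set.univ := by
  obtain ⟨σ, hσ, hwin⟩ := h
  let answer (n : ℕ) (s : Fin (n + 1) → openCovers X) : Set X := σ n fun i => s i
  have answer_mem (n : ℕ) (s : Fin n → openCovers X) (𝒰 : openCovers X) :
      answer n (Fin.snoc s 𝒰) ∈ 𝒰.1 := by
    simpa only [Fin.snoc_last] using
      hσ n (fun i => (Fin.snoc s 𝒰 : Fin (n + 1) → openCovers X) i) fun i => Subtype.property _
  choose x S hS_countable hS using fun n s =>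
    exists_countable_iInter_eq_nhdsKer hX (answer_mem n s)
  have hD_countable : (⋃ n, x n '' positions S n).Countable :=
    Set.countable_iUnion fun n => (countable_positions hS_countable n).image _
  have hD_nonempty : (⋃ n, x n '' positions S n).Nonempty :=
    ⟨x 0 Fin.elim0, Set.mem_iUnion.2 ⟨0, Set.mem_image_of_mem _ trivial⟩⟩
  obtain ⟨d, hd⟩ := hD_countable.exists_eq_range hD_nonempty
  refine ⟨d, Set.eq_univ_of_forall fun y => ?_⟩
  by_contra hy
  have exists_answer_avoiding (n : ℕ) (s : Fin n → openCovers X) (hs : s ∈ positions S n) :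
      ∃ 𝒰 ∈ S n s, y ∉ answer n (Fin.snoc s 𝒰) := by
    have hxd : {x n s} ⊆ Set.range d :=
      hd ▸ Set.singleton_subset_iff.2 (Set.mem_iUnion.2 ⟨n, Set.mem_image_of_mem _ hs⟩)
    have hys : y ∉ nhdsKer {x n s} := fun hys => hy (nhdsKer_mono hxd hys)
    simpa only [← hS, Set.mem_iInter, not_forall, exists_prop] using hys
  obtain ⟨A, hA⟩ := exists_play_of_forall_positions (p := fun n s => y ∉ answer n s)
    exists_answer_avoiding
  obtain ⟨_, ⟨n, rfl⟩, hyn⟩ :=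
    exists_mem_of_mem_openCovers (hwin (fun n => A n) fun n => (A n).2) y
  exact hA n hyn

theorem winMarkovOne_of_nhdsKer_range_eq_univ {d : ℕ → X}
    (hd : nhdsKer (Set.range d) = Set.univ) : WinMarkovOne (openCovers X) (openCovers X) := by
  have exists_mem (𝒰 : Set (Set X)) (n : ℕ) (h𝒰 : 𝒰 ∈ openCovers X) : ∃ U ∈ 𝒰, d n ∈ U :=
    exists_mem_of_mem_openCovers h𝒰 (d n)
  choose! τ τ_mem mem_τ using exists_mem
  refine ⟨τ, fun 𝒰 h𝒰 n => τ_mem 𝒰 n h𝒰, fun A hA => ?_⟩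
  have isOpen_τ (n : ℕ) : IsOpen (τ (A n) n) := (hA n).1 _ (τ_mem _ n (hA n))
  refine ⟨by rintro _ ⟨n, rfl⟩; exact isOpen_τ n, Set.eq_univ_of_forall fun y => ?_⟩
  obtain ⟨_, ⟨n, rfl⟩, hyn⟩ := mem_nhdsKer_iff_specializes.1 (hd ▸ Set.mem_univ y)
  exact ⟨_, ⟨n, rfl⟩, hyn.mem_open (isOpen_τ n) (mem_τ _ n (hA n))⟩

theorem isGδ_nhdsKer_singleton [FirstCountableTopology X] (x : X) : IsGδ (nhdsKer {x}) := by
  obtain ⟨U, hU, hU_basis⟩ := (nhds_basis_opens x).exists_antitone_subbasis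
  rw [nhdsKer_singleton_eq_ker_nhds, hU_basis.toHasBasis.ker]
  exact .biInter (Set.to_countable _) fun n _ => (hU n).2.isGδ

end Rothberger

theorem statement19_general (X : Type*) [TopologicalSpace X] (hX : ∀ x : X, IsGδ (nhdsKer {x})) :
    WinStratOne (openCovers X) (openCovers X) ↔
      WinMarkovOne (openCovers X) (openCovers X) := by
  refine ⟨fun h => ?_, WinMarkovOne.winStratOne_s19⟩
  obtain ⟨d, hd⟩ := h.exists_seq_nhdsKer_range_eq_univ hX
  exact winMarkovOne_of_nhdsKer_range_eq_univ hd

/-- for second-countable `X`, II wins the Rothberger game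
`G_1(𝒪_X, 𝒪_X)` iff II wins it with a Markov strategy. -/
theorem statement19 (X : Type*) [TopologicalSpace X] [SecondCountableTopology X] :
    WinStratOne (openCovers X) (openCovers X) ↔
      WinMarkovOne (openCovers X) (openCovers X) :=
  statement19_general X isGδ_nhdsKer_singleton
end
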